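/- The family {h_β : β ∈ 𝔹} is linearly independent over ℚ (so it is a basis of ℚ^𝔹), and the quotient of ℤ^𝔹 by the subgroup generated by {h_β : β ∈ 𝔹} is a finite abelian group of order ∏_𝔭 (p^{|𝔹_𝔭|} − 1), the product taken over the orbits 𝔹_𝔭 of σ. -/

import Mathlib

/- Setting: `B` is the finite nonempty set 𝔹 equipped with a permutation `σ` (Frobenius),
and `p` is a prime.  Weights live in `ℚ^𝔹 = (B → ℚ)`.  The orbits `𝔹_𝔭` of `σ` are the sets
`orbit σ β`, and for `T ⊆ 𝔹` we have `T_𝔭 = T ∩ orbit σ β`. -/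

open scoped Classical

noncomputable section

namespace GO

variable {B : Type*} [Fintype B] [DecidableEq B]

/-- The standard basis vector `e_β` of `ℚ^𝔹`. -/
def e (β : B) : B → ℚ := fun τ => if τ = β then 1 else 0

/-- `β'` lies in the `σ`-orbit of `β`. -/
def sameOrbit (σ : Equiv.Perm B) (β β' : B) : Prop := ∃ n : ℕ, (σ ^ n) β = β'

/-- The `σ`-orbit `𝔹_𝔭` of `β`. -/
def orbit (σ : Equiv.Perm B) (β : B) : Set B := {τ | sameOrbit σ β τ}

/-- `|𝔹_𝔭|`, the cardinality of the orbit of `β`. -/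
def orbitCard (σ : Equiv.Perm B) (β : B) : ℕ := (orbit σ β).ncard

/-- For `β`, `β'` in the same orbit: the unique `n` with `0 < n ≤ |𝔹_𝔭|` and `σ^n β' = β`,
realized as the least positive `n` with `σ^n β' = β`. -/
def steps (σ : Equiv.Perm B) (β' β : B) : ℕ := sInf {n : ℕ | 0 < n ∧ (σ ^ n) β' = β}

/-- For `β`, `β'` in the same orbit: the unique `n` with `0 ≤ n < |𝔹_𝔭|` and `σ^n β = β'`. -/
def steps0 (σ : Equiv.Perm B) (β β' : B) : ℕ := sInf {n : ℕ | (σ ^ n) β = β'}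

/-- `h_β^{β'} = -e_β + p^n e_{β'}` where `β = σ^n β'` with `0 < n ≤ |𝔹_𝔭|`. -/
def hvec (σ : Equiv.Perm B) (p : ℕ) (β β' : B) : B → ℚ :=
  -(e β) + ((p : ℚ) ^ steps σ β' β) • e β'

/-- `b_β^{β'} = e_β + p^n e_{β'}` where `β = σ^n β'` with `0 < n ≤ |𝔹_𝔭|`. -/
def bvec (σ : Equiv.Perm B) (p : ℕ) (β β' : B) : B → ℚ :=
  (e β) + ((p : ℚ) ^ steps σ β' β) • e β'

/-- `h_β = -e_β + p e_{σ⁻¹ β}`. -/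
def hsimple (σ : Equiv.Perm B) (p : ℕ) (β : B) : B → ℚ := -(e β) + (p : ℚ) • e (σ⁻¹ β)

/-- `b_β = e_β + p e_{σ⁻¹ β}`. -/
def bsimple (σ : Equiv.Perm B) (p : ℕ) (β : B) : B → ℚ := (e β) + (p : ℚ) • e (σ⁻¹ β)

/-- The `ℚ^{≥0}`-cone generated by a set `S` of vectors: all finite nonnegative rational
linear combinations of elements of `S`. -/
def cone {V : Type*} [AddCommMonoid V] [Module ℚ V] (S : Set V) : Set V :=
  {x | ∃ (n : ℕ) (c : Fin n → ℚ) (v : Fin n → V),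
    (∀ i, 0 ≤ c i) ∧ (∀ i, v i ∈ S) ∧ x = ∑ i, c i • v i}

/-- A chain in `T` (automatically contained in a single orbit, so this is the notion of a
chain in `T_𝔭` for `T_𝔭 ⊊ 𝔹_𝔭`): `C = {σ^{-i}β : 0 ≤ i ≤ m} ⊆ T` with `σβ ∉ T` and
`σ^{-m-1}β ∉ T`. -/
def IsChainIn (σ : Equiv.Perm B) (T : Set B) (C : Set B) : Prop :=
  ∃ (β : B) (m : ℕ), σ β ∉ T ∧ (σ⁻¹ ^ (m + 1)) β ∉ T ∧
    (∀ i ≤ m, (σ⁻¹ ^ i) β ∈ T) ∧ C = {τ | ∃ i ≤ m, τ = (σ⁻¹ ^ i) β}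

/-- `C̃` for a chain `C`: equals `C` if `m` is odd (i.e. `|C| = m+1` is even), and
`C ∪ {σ^{-m-1}β} = C ∪ σ⁻¹(C)` if `m` is even (i.e. `|C|` odd). -/
def chainExt (σ : Equiv.Perm B) (C : Set B) : Set B :=
  if Odd C.ncard then C ∪ (⇑σ⁻¹ '' C) else C

/-- `T̃ = ⋃_𝔭 T̃_𝔭`: the union of `T` with the extensions `C̃` of all chains `C` in `T`.
(For orbits with `T_𝔭 = 𝔹_𝔭` there are no chains and `T̃_𝔭 = 𝔹_𝔭 = T_𝔭`.) -/
def tilde (σ : Equiv.Perm B) (T : Set B) : Set B :=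
  T ∪ ⋃ (C : Set B) (_ : IsChainIn σ T C), chainExt σ C

/-- `μ_β`: the least `i > 0` with `σ^i β ∉ T` if `T_𝔭 ≠ 𝔹_𝔭`, and `0` if `T_𝔭 = 𝔹_𝔭`. -/
def mu (σ : Equiv.Perm B) (T : Set B) (β : B) : ℕ :=
  if orbit σ β ⊆ T then 0 else sInf {i : ℕ | 0 < i ∧ (σ ^ i) β ∉ T}

/-- `n_β`: the least `i > 0` with `σ^i β ∉ T̃` (meaningful when `T̃_𝔭 ≠ 𝔹_𝔭`). -/
def nn (σ : Equiv.Perm B) (T : Set B) (β : B) : ℕ :=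
  sInf {i : ℕ | 0 < i ∧ (σ ^ i) β ∉ tilde σ T}

/-- `ν_β`: the least `i ≥ 0` with `σ^{-i} β ∉ T` (meaningful when `T_𝔭 ≠ 𝔹_𝔭`). -/
def nu (σ : Equiv.Perm B) (T : Set B) (β : B) : ℕ :=
  sInf {i : ℕ | (σ⁻¹ ^ i) β ∉ T}

/-- `𝒯(T_𝔭) = (𝔹_𝔭 − T̃_𝔭) ∪ σ(T̃_𝔭 − T_𝔭)`, taken globally (union over all `𝔭`). -/
def Tscr (σ : Equiv.Perm B) (T : Set B) : Set B :=
  (tilde σ T)ᶜ ∪ (⇑σ '' (tilde σ T \ T))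

/-- The generating set `⋃_𝔭 𝒢(T_𝔭)`:
`{h_β^{β'} : β ∈ ℋ(T_𝔭), β' ∈ 𝒯(T_𝔭)} ∪ {±b_β : β ∈ T_𝔭}` over all `𝔭`. -/
def Dgen (σ : Equiv.Perm B) (p : ℕ) (T : Set B) : Set (B → ℚ) :=
  {v | ∃ β β', β ∉ T ∧ β' ∈ Tscr σ T ∧ sameOrbit σ β β' ∧ v = hvec σ p β β'}
  ∪ {v | ∃ β ∈ T, v = bsimple σ p β ∨ v = -(bsimple σ p β)}

/-- The cone `𝒟_T`. -/
def D (σ : Equiv.Perm B) (p : ℕ) (T : Set B) : Set (B → ℚ) := cone (Dgen σ p T)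

/-- `h_{σ^{n_β}β}^{β} = -e_{σ^{n_β}β} + p^{n_β} e_β`. -/
def fH (σ : Equiv.Perm B) (p : ℕ) (T : Set B) (β : B) : B → ℚ :=
  -(e ((σ ^ nn σ T β) β)) + ((p : ℚ) ^ nn σ T β) • e β

/-- `b_{σ^{n_β}β}^{β} = e_{σ^{n_β}β} + p^{n_β} e_β`. -/
def fB (σ : Equiv.Perm B) (p : ℕ) (T : Set B) (β : B) : B → ℚ :=
  (e ((σ ^ nn σ T β) β)) + ((p : ℚ) ^ nn σ T β) • e β

/-- The generating set `⋃_𝔭 𝒢′(T_𝔭)`: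
if `𝔹_𝔭 − T̃_𝔭 ≠ ∅` it is `{h_{σ^{n_β}β}^β : β ∈ 𝔹_𝔭 − T̃_𝔭} ∪ {−b_{σ^{n_β}β}^β : β ∈ T̃_𝔭 − T_𝔭}
∪ {±b_β : β ∈ T_𝔭}`, and if `𝔹_𝔭 = T̃_𝔭` it is `{−e_β : β ∈ 𝔹_𝔭 − T_𝔭} ∪ {±b_β : β ∈ T_𝔭}`. -/
def D'gen (σ : Equiv.Perm B) (p : ℕ) (T : Set B) : Set (B → ℚ) :=
  {v | ∃ β, β ∉ tilde σ T ∧ v = fH σ p T β}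
  ∪ {v | ∃ β, β ∈ tilde σ T ∧ β ∉ T ∧ ¬ orbit σ β ⊆ tilde σ T ∧ v = -(fB σ p T β)}
  ∪ {v | ∃ β, β ∉ T ∧ orbit σ β ⊆ tilde σ T ∧ v = -(e β)}
  ∪ {v | ∃ β ∈ T, v = bsimple σ p β ∨ v = -(bsimple σ p β)}

/-- The cone `𝒟′_T`. -/
def D' (σ : Equiv.Perm B) (p : ℕ) (T : Set B) : Set (B → ℚ) := cone (D'gen σ p T)

/-- `f_β(T)` for `β ∉ T`: `h_{σ^{n_β}β}^β` if `β ∈ 𝔹_𝔭 − T̃_𝔭`; `−b_{σ^{n_β}β}^β` if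
`β ∈ T̃_𝔭 − T_𝔭` and `𝔹_𝔭 ≠ T̃_𝔭`; and `−(1+p^{|𝔹_𝔭|}) e_β` if `𝔹_𝔭 = T̃_𝔭`. -/
def fvec (σ : Equiv.Perm B) (p : ℕ) (T : Set B) (β : B) : B → ℚ :=
  if orbit σ β ⊆ tilde σ T then -((1 + (p : ℚ) ^ orbitCard σ β) • e β)
  else if β ∈ tilde σ T then -(fB σ p T β) else fH σ p T β

/-- `𝔹(T) = ⋃_𝔭 𝔹_𝔭(T)`: `β ∈ 𝔹(T)` iff `β ∉ T`, the set `𝔹_𝔭 − T̃_𝔭` is nonempty, and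
`𝔹_𝔭 − T̃_𝔭 ≠ {β}` (this encodes all three cases of the definition of `𝔹_𝔭(T)`). -/
def BT (σ : Equiv.Perm B) (T : Set B) : Set B :=
  {β | β ∉ T ∧ (orbit σ β \ tilde σ T).Nonempty ∧ orbit σ β \ tilde σ T ≠ {β}}

/-- The sign function `ε_T : 𝔹 → {−1,0,1}`. -/
def epsT (σ : Equiv.Perm B) (T : Set B) (β : B) : ℚ :=
  if orbit σ β ⊆ T then 0
  else if β ∈ tilde σ T then (-1 : ℚ) ^ (mu σ T β - 1) else 1

/-- `L^ε[β, β'](κ) = Σ_{0 ≤ i ≤ n} ε(σ^iβ) p^i k_{σ^iβ}`, where `β' = σ^n β` with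
`0 ≤ n < |𝔹_𝔭|`. -/
def Lfun (σ : Equiv.Perm B) (p : ℕ) (ε : B → ℚ) (β β' : B) (κ : B → ℚ) : ℚ :=
  ∑ i ∈ Finset.range (steps0 σ β β' + 1), ε ((σ ^ i) β) * (p : ℚ) ^ i * κ ((σ ^ i) β)

/-- `L^ε[β] = L^ε[β, σ⁻¹β]`. -/
def Lfun1 (σ : Equiv.Perm B) (p : ℕ) (ε : B → ℚ) (β : B) (κ : B → ℚ) : ℚ :=
  Lfun σ p ε β (σ⁻¹ β) κ

/-- `L_{T,β}` for `β ∈ 𝔹 − T`: `L^{ε_T}[σ^{μ_β}β]` if `β ∈ 𝔹 − T̃`, and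
`L^{ε_T}[β, σ^{μ_β−1}β]` if `β ∈ T̃ − T`. -/
def LT (σ : Equiv.Perm B) (p : ℕ) (T : Set B) (β : B) (κ : B → ℚ) : ℚ :=
  if β ∈ tilde σ T then Lfun σ p (epsT σ T) β ((σ ^ (mu σ T β - 1)) β) κ
  else Lfun1 σ p (epsT σ T) ((σ ^ mu σ T β) β) κ

/-- `ε_{T,f_β}`: negates `ε_T` on `{β, σβ, …, σ^{μ_β−1}β}`. -/
def epsTf (σ : Equiv.Perm B) (T : Set B) (β τ : B) : ℚ :=
  if ∃ i < mu σ T β, τ = (σ ^ i) β then -(epsT σ T τ) else epsT σ T τ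

/-- `L_{T,f_β,τ}` for `β ∈ 𝔹(T)` and `τ ∈ 𝔹 − (T ∪ {σ^{n_β}β})`, with `β′ = σ^{n_β}β` and
`β̃ = σ^{μ_{β′}}β′`. -/
def LTf (σ : Equiv.Perm B) (p : ℕ) (T : Set B) (β τ : B) (κ : B → ℚ) : ℚ :=
  if τ = β then
    (if β ∈ tilde σ T then
      Lfun1 σ p (epsTf σ T β) ((σ ^ mu σ T ((σ ^ nn σ T β) β)) ((σ ^ nn σ T β) β)) κ
    else
      Lfun σ p (epsTf σ T β) β (σ⁻¹ ((σ ^ mu σ T ((σ ^ nn σ T β) β)) ((σ ^ nn σ T β) β))) κ)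
  else
    (if τ ∈ tilde σ T then LT σ p T τ κ
     else Lfun1 σ p (epsTf σ T β) ((σ ^ mu σ T τ) τ) κ)

/-- `𝒟_{T,f_β} = {κ : L_{T,f_β,τ}(κ) ≥ 0 for all τ ∈ 𝔹 − (T ∪ {σ^{n_β}β})}`. -/
def Df (σ : Equiv.Perm B) (p : ℕ) (T : Set B) (β : B) : Set (B → ℚ) :=
  {κ | ∀ τ, τ ∉ T → τ ≠ (σ ^ nn σ T β) β → 0 ≤ LTf σ p T β τ κ}

/-- `i_T : ℚ^𝔹 → ℚ^{𝔹−T}`, the linear map with `i_T(e_β) = 0` if `T_𝔭 = 𝔹_𝔭` and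
`i_T(e_β) = (−p)^{ν_β} e_{σ^{−ν_β}β}` otherwise. -/
def iT (σ : Equiv.Perm B) (p : ℕ) (T : Set B) (κ : B → ℚ) : {β : B // β ∉ T} → ℚ :=
  fun β₀ => ∑ β : B, κ β *
    (if orbit σ β ⊆ T then 0
     else if (σ⁻¹ ^ nu σ T β) β = β₀.1 then (-(p : ℚ)) ^ nu σ T β else 0)

/-- Restriction to `ℚ^{𝔹−T}` of a vector of `ℚ^𝔹` (used for vectors supported on `𝔹 − T`). -/
def res (T : Set B) (v : B → ℚ) : {β : B // β ∉ T} → ℚ := fun β => v β.1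

/-- The generating set `𝒢^{T-red}(T) = ⋃_𝔭 𝒢_𝔭^{T-red}(T)` of the reduced cone. -/
def Gred (σ : Equiv.Perm B) (p : ℕ) (T : Set B) : Set ({β : B // β ∉ T} → ℚ) :=
  {v | ∃ β, β ∉ tilde σ T ∧ v = res T (fH σ p T β)}
  ∪ {v | ∃ β, β ∈ tilde σ T ∧ β ∉ T ∧ ¬ orbit σ β ⊆ tilde σ T ∧ v = res T (-(fB σ p T β))}
  ∪ {v | ∃ β, β ∉ T ∧ orbit σ β ⊆ tilde σ T ∧ v = res T (-(e β))}

/-- The minimal cone `𝒞^min_T = i_T(𝒟_T ∩ ⋂_{β ∈ 𝔹(T)} 𝒟_{T,f_β}) ⊆ ℚ^{𝔹−T}`. -/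
def Cmin (σ : Equiv.Perm B) (p : ℕ) (T : Set B) : Set ({β : B // β ∉ T} → ℚ) :=
  iT σ p T '' (D σ p T ∩ {κ | ∀ β ∈ BT σ T, κ ∈ Df σ p T β})

/-- `g_β`: `b_β` if `β ∈ T_𝔭`; `−e_β` if `β ∈ T̃_𝔭 − T_𝔭` and `𝔹_𝔭 = T̃_𝔭`;
`−b_{σ^{n_β}β}^β` if `β ∈ T̃_𝔭 − T_𝔭` and `𝔹_𝔭 ≠ T̃_𝔭`; `h_{σ^{n_β}β}^β` if `β ∈ 𝔹_𝔭 − T̃_𝔭`. -/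
def gvec (σ : Equiv.Perm B) (p : ℕ) (T : Set B) (β : B) : B → ℚ :=
  if β ∈ T then bsimple σ p β
  else if orbit σ β ⊆ tilde σ T then -(e β)
  else if β ∈ tilde σ T then -(fB σ p T β)
  else fH σ p T β

/-- The map `σ̄ : β ↦ σ^{n_β} β`. -/
def sigbar (σ : Equiv.Perm B) (T : Set B) (β : B) : B := (σ ^ nn σ T β) β

/-- `h_β = -e_β + p e_{σ⁻¹β}` as an element of `ℤ^𝔹`. -/
def hZ (σ : Equiv.Perm B) (p : ℕ) (β : B) : B → ℤ :=
  fun τ => (if τ = β then -1 else 0) + (if τ = σ⁻¹ β then (p : ℤ) else 0)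

end GO

end

/-!
Work over a commutative ring `R` with an element `x` in place of `p`. Modulo the relations
`e_β = x e_{σ⁻¹β}`, each orbit `O` is generated by a single `e_r` with `r ∈ O`, since
`e_{σⁿr} = xⁿ e_r`, and going once around the orbit leaves exactly the relation
`(x ^ |O| - 1) e_r = 0`. Hence the quotient of `R^𝔹` is `∏_O R ⧸ (x ^ |O| - 1)`.
For `R = ℤ` and `x = p` this gives the order of the quotient; for `R = ℚ` every factor vanishes,
so the `h_β` span `ℚ^𝔹`, and being `|𝔹|` in number they are linearly independent.
-/

namespace GO

section Orbits

variable {B : Type*} (σ : Equiv.Perm B)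

lemma mem_orbit_self (β : B) : β ∈ orbit σ β := ⟨0, rfl⟩

variable {σ} in
lemma pow_steps0_apply {β β' : B} (h : β' ∈ orbit σ β) : (σ ^ steps0 σ β β') β = β' :=
  Nat.sInf_mem h

lemma steps0_self (β : B) : steps0 σ β β = 0 :=
  Nat.sInf_eq_zero.2 (Or.inl rfl)

variable [Finite B]

lemma mem_orbit_iff_sameCycle {β τ : B} : τ ∈ orbit σ β ↔ σ.SameCycle β τ :=
  ⟨fun ⟨n, hn⟩ => ⟨n, hn⟩, fun h => h.exists_nat_pow_eq⟩

lemma orbit_apply (β : B) : orbit σ (σ β) = orbit σ β := by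
  ext τ
  simp only [mem_orbit_iff_sameCycle, Equiv.Perm.sameCycle_apply_left]

lemma orbit_eq_mulActionOrbit (β : B) :
    orbit σ β = MulAction.orbit (Subgroup.zpowers σ) β := by
  ext τ
  rw [mem_orbit_iff_sameCycle]
  exact ⟨fun ⟨n, hn⟩ => ⟨⟨σ ^ n, n, rfl⟩, hn⟩, fun ⟨⟨_, n, rfl⟩, h⟩ => ⟨n, h⟩⟩

lemma ncard_orbit (β : B) : (orbit σ β).ncard = Function.minimalPeriod (σ • ·) β := by
  have := Fintype.ofFinite (MulAction.orbit (Subgroup.zpowers σ) β)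
  rw [MulAction.minimalPeriod_eq_card, orbit_eq_mulActionOrbit, ← Nat.card_coe_set_eq,
    Nat.card_eq_fintype_card]

lemma ncard_orbit_ne_zero (β : B) : (orbit σ β).ncard ≠ 0 :=
  Set.ncard_ne_zero_of_mem (mem_orbit_self σ β)

lemma pow_apply_eq_pow_apply_iff (β : B) (m n : ℕ) :
    (σ ^ m) β = (σ ^ n) β ↔ m ≡ n [MOD (orbit σ β).ncard] := by
  rw [Nat.modEq_iff_dvd, ncard_orbit, ← MulAction.zpow_smul_eq_iff_minimalPeriod_dvd,
    sub_eq_neg_add, zpow_add, zpow_neg, mul_smul, inv_smul_eq_iff, eq_comm]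
  simp only [zpow_natCast, Equiv.Perm.smul_def]

end Orbits

section OrbitRepresentatives

variable {B : Type*} (σ : Equiv.Perm B)

/-- The orbit of `β`, as an element of the range of `orbit σ`, which serves as the type of
orbits. -/
abbrev orbitOf (β : B) : Set.range (orbit σ) := Set.rangeFactorization (orbit σ) β

/-- A chosen base point of each orbit. -/
noncomputable def orbitRep (O : Set.range (orbit σ)) : B := Set.rangeSplitting (orbit σ) O

/-- The number of `σ`-steps from the base point of the orbit of `β` to `β`. -/
noncomputable def orbitPos (β : B) : ℕ := steps0 σ (orbitRep σ (orbitOf σ β)) β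

lemma orbit_orbitRep (O : Set.range (orbit σ)) : orbit σ (orbitRep σ O) = O :=
  Set.apply_rangeSplitting (orbit σ) O

lemma orbitOf_orbitRep (O : Set.range (orbit σ)) :
    orbitOf σ (orbitRep σ O) = O :=
  Subtype.ext (orbit_orbitRep σ O)

lemma orbitPos_orbitRep (O : Set.range (orbit σ)) : orbitPos σ (orbitRep σ O) = 0 := by
  rw [orbitPos, orbitOf_orbitRep, steps0_self]

lemma pow_orbitPos_apply_orbitRep (β : B) :
    (σ ^ orbitPos σ β) (orbitRep σ (orbitOf σ β)) = β :=
  pow_steps0_apply (by rw [orbit_orbitRep]; exact mem_orbit_self σ β)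

variable [Finite B]

lemma orbitOf_apply (β : B) :
    orbitOf σ (σ β) = orbitOf σ β :=
  Subtype.ext (orbit_apply σ β)

lemma orbitPos_apply_modEq (β : B) :
    orbitPos σ (σ β) ≡ orbitPos σ β + 1 [MOD (orbitOf σ β : Set B).ncard] := by
  have h := pow_orbitPos_apply_orbitRep σ (σ β)
  rw [orbitOf_apply] at h
  have := (pow_apply_eq_pow_apply_iff σ (orbitRep σ (orbitOf σ β))
    (orbitPos σ (σ β)) (orbitPos σ β + 1)).1 (by
      rw [h, pow_succ', Equiv.Perm.mul_apply, pow_orbitPos_apply_orbitRep])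
  rwa [orbit_orbitRep] at this

end OrbitRepresentatives

section Relations

variable {B R : Type*} [DecidableEq B] [CommRing R] (σ : Equiv.Perm B) (x : R)

/-- `h_β = -e_β + x e_{σ⁻¹β}` in `R^𝔹`, for an arbitrary ring element `x` in place of `p`. -/
noncomputable def hRing (β : B) : B → R := -Pi.single β 1 + x • Pi.single (σ⁻¹ β) 1

lemma hRing_perm_apply (β : B) : hRing σ x (σ β) = -Pi.single (σ β) 1 + x • Pi.single β 1 := by
  rw [hRing, σ.inv_eq_iff_eq.2 rfl]

lemma hsimple_eq_hRing (p : ℕ) (β : B) : hsimple σ p β = hRing σ (p : ℚ) β := by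
  ext τ
  simp only [hsimple, hRing, e, Pi.add_apply, Pi.neg_apply, Pi.smul_apply, Pi.single_apply]

lemma hZ_eq_hRing (p : ℕ) : hZ σ p = hRing σ (p : ℤ) := by
  ext β τ
  simp only [hZ, hRing, Pi.add_apply, Pi.neg_apply, Pi.smul_apply, Pi.single_apply, smul_eq_mul,
    mul_ite, mul_one, mul_zero, apply_ite Neg.neg, neg_zero]

/-- The submodule of `R^𝔹` generated by the `h_β`. -/
abbrev hSpan : Submodule R (B → R) := Submodule.span R (Set.range (hRing σ x))

lemma mkQ_single_perm_apply (β : B) :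
    (hSpan σ x).mkQ (Pi.single (σ β) 1) = x • (hSpan σ x).mkQ (Pi.single β 1) := by
  have h : (hSpan σ x).mkQ (hRing σ x (σ β)) = 0 :=
    (Submodule.Quotient.mk_eq_zero _).2 (Submodule.subset_span ⟨σ β, rfl⟩)
  rwa [hRing_perm_apply, map_add, map_neg, map_smul, neg_add_eq_zero] at h

lemma mkQ_single_perm_pow_apply (n : ℕ) (β : B) :
    (hSpan σ x).mkQ (Pi.single ((σ ^ n) β) 1) = x ^ n • (hSpan σ x).mkQ (Pi.single β 1) := by
  induction n with
  | zero => rw [pow_zero, pow_zero, one_smul, Equiv.Perm.one_apply]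
  | succ n ih =>
    rw [pow_succ', Equiv.Perm.mul_apply, mkQ_single_perm_apply, ih, smul_smul, pow_succ']

lemma pow_ncard_sub_one_smul_mkQ_single [Finite B] (β : B) :
    (x ^ (orbit σ β).ncard - 1) • (hSpan σ x).mkQ (Pi.single β 1) = 0 := by
  have hperiod : (σ ^ (orbit σ β).ncard) β = β :=
    (pow_apply_eq_pow_apply_iff σ β _ 0).2 (Nat.modEq_zero_iff_dvd.2 dvd_rfl)
  rw [sub_smul, one_smul, ← mkQ_single_perm_pow_apply, hperiod, sub_self]

end Relations

section QuotientEquiv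

variable {B R : Type*} [Fintype B] [DecidableEq B] [CommRing R] (σ : Equiv.Perm B) (x : R)

/-- The factor `R ⧸ (x ^ |O| - 1)` contributed by the orbit `O`. -/
abbrev OrbitFactor (O : Set.range (orbit σ)) : Type _ :=
  R ⧸ Ideal.span {x ^ (O : Set B).ncard - 1}

lemma quotientMk_pow_eq_one (n : ℕ) : (Ideal.Quotient.mk (Ideal.span {x ^ n - 1}) x) ^ n = 1 := by
  rw [← map_pow, ← map_one (Ideal.Quotient.mk _), Ideal.Quotient.mk_eq_mk_iff_sub_mem]
  exact Ideal.mem_span_singleton_self _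

/-- The map `R^𝔹 → ∏_O R ⧸ (x ^ |O| - 1)` sending `e_β` to `xⁿ` in the factor of its orbit, where
`n` is the position of `β` in that orbit. -/
noncomputable def toOrbitFactors : (B → R) →ₗ[R] ∀ O, OrbitFactor σ x O :=
  Fintype.linearCombination R fun β =>
    Pi.single (orbitOf σ β) (Ideal.Quotient.mk _ (x ^ orbitPos σ β))

lemma toOrbitFactors_single (β : B) :
    toOrbitFactors σ x (Pi.single β 1) = Pi.single (orbitOf σ β)
      (Ideal.Quotient.mk _ (x ^ orbitPos σ β)) := by
  rw [toOrbitFactors, Fintype.linearCombination_apply_single, one_smul]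

lemma toOrbitFactors_single_perm_apply (β : B) :
    toOrbitFactors σ x (Pi.single (σ β) 1) = x • toOrbitFactors σ x (Pi.single β 1) := by
  rw [toOrbitFactors_single, toOrbitFactors_single, orbitOf_apply, ← Pi.single_smul]
  congr 1
  rw [map_pow, pow_eq_pow_of_modEq (orbitPos_apply_modEq σ β) (quotientMk_pow_eq_one x _),
    pow_succ', ← map_pow]
  rfl

lemma hSpan_le_ker_toOrbitFactors : hSpan σ x ≤ LinearMap.ker (toOrbitFactors σ x) := by
  rw [Submodule.span_le]
  rintro _ ⟨β, rfl⟩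
  obtain ⟨γ, rfl⟩ := σ.surjective β
  rw [SetLike.mem_coe, LinearMap.mem_ker, hRing_perm_apply, map_add, map_neg, map_smul,
    toOrbitFactors_single_perm_apply, neg_add_cancel]

/-- The map `∏_O R ⧸ (x ^ |O| - 1) → R^𝔹 ⧸ ⟨h_β⟩` sending the generator of the factor of `O` to the
class of `e_r`, where `r` is the base point of `O`. -/
noncomputable def ofOrbitFactors : (∀ O, OrbitFactor σ x O) →ₗ[R] (B → R) ⧸ hSpan σ x :=
  LinearMap.lsum R (OrbitFactor σ x) R fun O =>
    Submodule.liftQSpanSingleton _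
      (LinearMap.toSpanSingleton R _ ((hSpan σ x).mkQ (Pi.single (orbitRep σ O) 1)))
      (by
        rw [LinearMap.toSpanSingleton_apply, ← orbit_orbitRep]
        exact pow_ncard_sub_one_smul_mkQ_single σ x (orbitRep σ O))

lemma ofOrbitFactors_single_mk (O : Set.range (orbit σ)) (a : R) :
    ofOrbitFactors σ x (Pi.single O (Ideal.Quotient.mk _ a)) =
      a • (hSpan σ x).mkQ (Pi.single (orbitRep σ O) 1) := by
  rw [ofOrbitFactors, LinearMap.lsum_piSingle]
  rfl

lemma liftQ_toOrbitFactors_comp_ofOrbitFactors :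
    (hSpan σ x).liftQ (toOrbitFactors σ x) (hSpan_le_ker_toOrbitFactors σ x) ∘ₗ
      ofOrbitFactors σ x = LinearMap.id := by
  refine LinearMap.pi_ext fun O y => ?_
  obtain ⟨a, rfl⟩ := Ideal.Quotient.mk_surjective y
  rw [LinearMap.comp_apply, ofOrbitFactors_single_mk, map_smul, Submodule.mkQ_apply,
    Submodule.liftQ_apply, toOrbitFactors_single, orbitPos_orbitRep, pow_zero, map_one,
    orbitOf_orbitRep, ← Pi.single_smul, ← Algebra.algebraMap_eq_smul_one,
    Ideal.Quotient.algebraMap_eq, LinearMap.id_apply]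

lemma ofOrbitFactors_comp_toOrbitFactors :
    ofOrbitFactors σ x ∘ₗ toOrbitFactors σ x = (hSpan σ x).mkQ := by
  refine LinearMap.pi_ext' fun β => LinearMap.ext_ring ?_
  simp only [LinearMap.comp_apply, LinearMap.coe_single]
  rw [toOrbitFactors_single, ofOrbitFactors_single_mk, ← mkQ_single_perm_pow_apply,
    pow_orbitPos_apply_orbitRep]

/-- `R^𝔹 ⧸ ⟨h_β⟩ ≃ ∏_O R ⧸ (x ^ |O| - 1)`, the product over the orbits of `σ`. -/
noncomputable def quotientEquivOrbitFactors :
    ((B → R) ⧸ hSpan σ x) ≃ₗ[R] ∀ O, OrbitFactor σ x O :=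
  LinearEquiv.ofLinearMap
    ((hSpan σ x).liftQ (toOrbitFactors σ x) (hSpan_le_ker_toOrbitFactors σ x))
    (ofOrbitFactors σ x)
    (liftQ_toOrbitFactors_comp_ofOrbitFactors σ x)
    (Submodule.linearMap_qext _ (ofOrbitFactors_comp_toOrbitFactors σ x))

end QuotientEquiv

section Consequences

variable {B R : Type*} [Finite B] [DecidableEq B] [CommRing R] (σ : Equiv.Perm B)

lemma hSpan_eq_top {x : R} (hx : ∀ β, IsUnit (x ^ (orbit σ β).ncard - 1)) : hSpan σ x = ⊤ := by
  have := Fintype.ofFinite B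
  have hfactor : ∀ O, Subsingleton (OrbitFactor σ x O) := by
    rintro ⟨_, β, rfl⟩
    exact Ideal.Quotient.subsingleton_iff.2 (Ideal.span_singleton_eq_top.2 (hx β))
  exact Submodule.Quotient.subsingleton_iff.1
    (quotientEquivOrbitFactors σ x).toEquiv.subsingleton

lemma linearIndependent_hRing [Nontrivial R] {x : R}
    (hx : ∀ β, IsUnit (x ^ (orbit σ β).ncard - 1)) : LinearIndependent R (hRing σ x) := by
  have := Fintype.ofFinite B
  exact linearIndependent_of_top_le_span_of_card_eq_finrank (hSpan_eq_top σ hx).ge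
    (Module.finrank_fintype_fun_eq_card R).symm

lemma card_int_quotient_closure_hRing {B : Type*} [Fintype B] [DecidableEq B]
    (σ : Equiv.Perm B) (x : ℤ) :
    Nat.card ((B → ℤ) ⧸ AddSubgroup.closure (Set.range (hRing σ x))) =
      ∏ O ∈ Finset.univ.image (orbit σ), (x ^ O.ncard - 1).natAbs := by
  rw [← Submodule.span_int_eq_addSubgroupClosure]
  calc Nat.card ((B → ℤ) ⧸ hSpan σ x)
    _ = Nat.card (∀ O, OrbitFactor σ x O) :=
        Nat.card_congr (quotientEquivOrbitFactors σ x).toEquiv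
    _ = ∏ O : Set.range (orbit σ), (x ^ (O : Set B).ncard - 1).natAbs := by
        simp only [Nat.card_pi, Nat.card_congr (Int.quotientSpanEquivZMod _).toEquiv,
          Nat.card_zmod]
    _ = ∏ O ∈ Finset.univ.image (orbit σ), (x ^ O.ncard - 1).natAbs :=
        (Finset.prod_subtype (Finset.univ.image (orbit σ)) (by simp)
          fun O => (x ^ O.ncard - 1).natAbs).symm

lemma natAbs_natCast_pow_sub_one {p : ℕ} (hp : p ≠ 0) (n : ℕ) :
    ((p : ℤ) ^ n - 1).natAbs = p ^ n - 1 := by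
  rw [← Nat.cast_pow, ← Nat.cast_one, ← Nat.cast_sub (Nat.one_le_pow _ _ (Nat.pos_of_ne_zero hp)),
    Int.natAbs_natCast]

lemma isUnit_pow_sub_one {K : Type*} [Field K] [LinearOrder K] [IsStrictOrderedRing K] {a : K}
    (ha : 1 < a) {n : ℕ} (hn : n ≠ 0) : IsUnit (a ^ n - 1) :=
  (sub_pos.2 (one_lt_pow₀ ha hn)).ne'.isUnit

end Consequences

end GO

theorem statement18_general {B : Type*} [Fintype B] [DecidableEq B]
    (σ : Equiv.Perm B) (p : ℕ) (hp : 1 < p) :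
    LinearIndependent ℚ (fun β : B => GO.hsimple σ p β) ∧
    Submodule.span ℚ (Set.range fun β : B => GO.hsimple σ p β) = ⊤ ∧
    Nat.card ((B → ℤ) ⧸ AddSubgroup.closure (Set.range (GO.hZ σ p)))
      = ∏ O ∈ Finset.univ.image (fun β : B => GO.orbit σ β), (p ^ O.ncard - 1) := by
  have hunit : ∀ β, IsUnit ((p : ℚ) ^ (GO.orbit σ β).ncard - 1) := fun β =>
    GO.isUnit_pow_sub_one (Nat.one_lt_cast.2 hp) (GO.ncard_orbit_ne_zero σ β)
  simp only [GO.hsimple_eq_hRing, GO.hZ_eq_hRing]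
  refine ⟨GO.linearIndependent_hRing σ hunit, GO.hSpan_eq_top σ hunit, ?_⟩
  simp only [GO.card_int_quotient_closure_hRing,
    GO.natAbs_natCast_pow_sub_one (Nat.ne_zero_of_lt hp)]

/-- the family `{h_β : β ∈ 𝔹}` is linearly independent over `ℚ` (hence a
basis of `ℚ^𝔹`), and `ℤ^𝔹` modulo the subgroup generated by the `h_β` is a finite abelian
group of order `∏_𝔭 (p^{|𝔹_𝔭|} − 1)`. -/
theorem statement18 {B : Type*} [Fintype B] [DecidableEq B] [Nonempty B]
    (σ : Equiv.Perm B) (p : ℕ) (hp : p.Prime) :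
    LinearIndependent ℚ (fun β : B => GO.hsimple σ p β) ∧
    Submodule.span ℚ (Set.range fun β : B => GO.hsimple σ p β) = ⊤ ∧
    Nat.card ((B → ℤ) ⧸ AddSubgroup.closure (Set.range (GO.hZ σ p)))
      = ∏ O ∈ Finset.univ.image (fun β : B => GO.orbit σ β), (p ^ O.ncard - 1) :=
  statement18_general σ p hp.one_lt
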